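/- arXiv:2601.12881 — 7 statements merged into one kernel-verified Lean document; each statement's English description precedes it below -/
import Mathlib

section
/- For every 1 ≤ i ≤ N−1, the Demazure–Lusztig operator satisfies the quadratic Hecke relation (T_i − t·id) ∘ (T_i + id) = 0 on F[x_1,…,x_N]; equivalently, T_i(T_i(P)) = (t−1)·T_i(P) + t·P for every polynomial P. -/
open MvPolynomial

noncomputable section

/-- `Frac` is the field `F = ℂ(t)` of rational functions over `ℂ`. -/
abbrev Frac : Type := RatFunc ℂ

/-- The polynomial ring `R = F[x_1, …, x_N]`. -/
abbrev Pol (N : ℕ) : Type := MvPolynomial (Fin N) Frac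

/-- The parameter `t ∈ F = ℂ(t)`. -/
def tF : Frac := RatFunc.X

/-- `si N i hi` is the `F`-algebra automorphism of `F[x_1,…,x_N]` exchanging the variables
in positions `i` and `i+1` (0-indexed) and fixing all other variables. -/
def si (N i : ℕ) (hi : i + 1 < N) : Pol N → Pol N :=
  rename (⇑(Equiv.swap (⟨i, Nat.lt_of_succ_lt hi⟩ : Fin N) ⟨i + 1, hi⟩))

/-- `IsDemazureLusztig N i hi T` asserts that the `F`-linear map `T` satisfies the identity
`(x_i - x_{i+1}) · T(P) = (t-1)·(x_i·P - x_{i+1}·s_i(P)) + (x_i - x_{i+1})·s_i(P)`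
for all `P`, which uniquely characterizes the Demazure–Lusztig operator `T_i`. -/
def IsDemazureLusztig (N i : ℕ) (hi : i + 1 < N) (T : Pol N →ₗ[Frac] Pol N) : Prop :=
  ∀ P : Pol N,
    (X (⟨i, Nat.lt_of_succ_lt hi⟩ : Fin N) - X ⟨i + 1, hi⟩) * T P =
      (C tF - 1) * (X (⟨i, Nat.lt_of_succ_lt hi⟩ : Fin N) * P
          - X (⟨i + 1, hi⟩ : Fin N) * si N i hi P)
        + (X (⟨i, Nat.lt_of_succ_lt hi⟩ : Fin N) - X ⟨i + 1, hi⟩) * si N i hi P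

/-!
Write `a = x_i` and `b = x_{i+1}`. The defining identity says
`(a - b) * (T p + p) = (t * a - b) * p + (a - t * b) * s p`. Since `s` exchanges `a` and `b`, it
negates both sides, so `T p + p` is fixed by `s`. On elements fixed by `s` the operator is
multiplication by `t`, hence `(T - t) ∘ (T + 1) = 0`.
-/

/-- The defining identity of a Demazure–Lusztig operator over an arbitrary commutative ring `A`,
with `s` in the role of the transposition `s_i`, `a` in that of `x_i` and `s a` in that of
`x_{i+1}`. It determines `T` when `a - s a` is a nonzerodivisor, so `T` is only taken to be a
function. -/
def IsDemazureLusztigFor {A : Type*} [CommRing A] (s : A →+* A) (t a : A) (T : A → A) : Prop :=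
  ∀ p, (a - s a) * T p = (t - 1) * (a * p - s a * s p) + (a - s a) * s p

namespace IsDemazureLusztigFor

variable {A : Type*} [CommRing A] {s : A →+* A} {t a : A} {T : A → A}

protected theorem map_add (hT : IsDemazureLusztigFor s t a T) (ha : IsLeftRegular (a - s a))
    (p q : A) : T (p + q) = T p + T q := by
  refine ha (?_ : (a - s a) * T (p + q) = (a - s a) * (T p + T q))
  rw [mul_add, hT, hT, hT, map_add]
  ring

theorem apply_eq_mul_of_map_eq (hT : IsDemazureLusztigFor s t a T) (ha : IsLeftRegular (a - s a))
    {q : A} (hq : s q = q) : T q = t * q := by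
  refine ha (?_ : (a - s a) * T q = (a - s a) * (t * q))
  rw [hT, hq]
  ring

theorem map_apply_add_self (hT : IsDemazureLusztigFor s t a T) (ha : IsLeftRegular (a - s a))
    (hs : Function.Involutive s) (ht : s t = t) (p : A) : s (T p + p) = T p + p := by
  have hTp : (a - s a) * (T p + p) = (t * a - s a) * p + (a - t * s a) * s p := by
    linear_combination hT p
  have hsTp := congrArg s hTp
  simp only [map_mul, map_sub, map_add s, hs a, hs p, ht] at hsTp
  refine ha (?_ : (a - s a) * s (T p + p) = (a - s a) * (T p + p))
  rw [map_add]
  linear_combination -hsTp - hTp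

theorem quadratic_relation (hT : IsDemazureLusztigFor s t a T) (ha : IsLeftRegular (a - s a))
    (hs : Function.Involutive s) (ht : s t = t) (p : A) :
    T (T p) = (t - 1) * T p + t * p := by
  have hsum : T (T p) + T p = t * (T p + p) := by
    rw [← hT.map_add ha, hT.apply_eq_mul_of_map_eq ha (hT.map_apply_add_self ha hs ht p)]
  linear_combination hsum

end IsDemazureLusztigFor

section MvPolynomial

variable {σ R : Type*} [CommRing R]

theorem isLeftRegular_X_sub_X {i j : σ} (hij : i ≠ j) :
    IsLeftRegular (X i - X j : MvPolynomial σ R) := by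
  classical
  -- The shear `X i ↦ X i + X j` is invertible and turns `X i - X j` into the regular element `X i`.
  let shear (c : MvPolynomial σ R) : MvPolynomial σ R →ₐ[R] MvPolynomial σ R :=
    aeval (Function.update X i (X i + c))
  have shear_leftInverse : Function.LeftInverse (shear (-X j)) (shear (X j)) := by
    refine DFunLike.congr_fun (?_ : (shear (-X j)).comp (shear (X j)) = AlgHom.id R _)
    ext1 k
    obtain rfl | hk := eq_or_ne k i
    · simp [shear, hij.symm]
    · simp [shear, hk]
  have shear_X_sub_X : shear (X j) (X i - X j) = X i := by simp [shear, hij.symm]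
  intro p q hpq
  have h := congrArg (shear (X j)) hpq
  simp only [map_mul, shear_X_sub_X] at h
  exact shear_leftInverse.injective (isRegular_X.left h)

theorem stmt_1_general [DecidableEq σ] {i j : σ} (hij : i ≠ j) (t : R)
    (T : MvPolynomial σ R → MvPolynomial σ R)
    (hT : ∀ p, (X i - X j) * T p =
      (C t - 1) * (X i * p - X j * rename (Equiv.swap i j) p)
        + (X i - X j) * rename (Equiv.swap i j) p)
    (p : MvPolynomial σ R) :
    T (T p) = (C t - 1) * T p + C t * p := by
  let s : MvPolynomial σ R →+* MvPolynomial σ R := ↑(rename (R := R) (Equiv.swap i j))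
  have s_X : s (X i) = X j := by simp [s]
  have isDemazureLusztig : IsDemazureLusztigFor s (C t) (X i) T := fun q => by rw [s_X]; exact hT q
  have regular : IsLeftRegular (X i - s (X i)) := s_X ▸ isLeftRegular_X_sub_X hij
  exact isDemazureLusztig.quadratic_relation regular
    (rename_leftInverse (Equiv.swap_apply_self i j)) (rename_C _ t) p

end MvPolynomial

/-- the Demazure–Lusztig operator satisfies the quadratic Hecke relation
`T_i(T_i(P)) = (t-1)·T_i(P) + t·P` for every polynomial `P`. -/
theorem stmt_1 (N : ℕ) (hN : 2 ≤ N) (i : ℕ) (hi : i + 1 < N)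
    (T : Pol N →ₗ[Frac] Pol N) (hT : IsDemazureLusztig N i hi T) (P : Pol N) :
    T (T P) = (C tF - 1) * T P + C tF * P :=
  stmt_1_general (by simp [Fin.ext_iff]) tF T hT P
end
end

section
/- Let a, b ≥ 1 be integers and let (a_1,b_1), …, (a_n,b_n) be pairs of natural numbers, and set P = ∏_{i=1}^n (1 − q^{a_i} t^{b_i}) in ℂ[q,t]. Then 1 − q^a t^b divides P in ℂ[q,t] if and only if there exists an index i such that 1 − q^a t^b divides 1 − q^{a_i} t^{b_i} in ℂ[q,t]. -/
open MvPolynomial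

noncomputable section

/-- `CQT` is the polynomial ring `ℂ[q,t]` in two indeterminates over `ℂ`. -/
abbrev CQT : Type := MvPolynomial (Fin 2) ℂ

/-- The indeterminate `q` of `ℂ[q,t]`. -/
def qP : CQT := X 0

/-- The indeterminate `t` of `ℂ[q,t]`. -/
def tP : CQT := X 1

/-!
For a character `χ` of the monoid of exponents with values in a domain, `X ^ u ↦ χ u` extends to an
algebra homomorphism. If `χ m = 1`, it kills `1 - X ^ m`, hence every multiple of it, so a product
`∏ (1 - X ^ uᵢ)` divisible by `1 - X ^ m` has some `χ uᵢ = 1`. It remains to find, for `m j ≠ 0`,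
a `χ` which is trivial on the multiples of `m` only. The Laurent monomial `z ^ (u j • m - m j • u)`
detects whether `u` is proportional to `m`, and the factor `ζ ^ u j`, for `ζ` a primitive `m j`-th
root of unity, whether the ratio `u j / m j` is an integer. For two variables and `m = (a, b)`, this
substitutes `q = ζ x ^ b` and `t = x ^ (-a)`.
-/

variable {σ R K ι : Type*}

/-- The vector `u j • m - m j • u` of `2 × 2` minors of the pair `(u, m)` involving column `j`. When
`m j ≠ 0`, it vanishes exactly when `u` is a rational multiple of `m`. The values are integers, as
the entries have both signs. -/
def crossDifference (m : σ →₀ ℕ) (j : σ) : (σ →₀ ℕ) →+ (σ → ℤ) where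
  toFun u i := u j * m i - m j * u i
  map_zero' := by ext; simp
  map_add' u v := by ext; simp only [Finsupp.add_apply, Nat.cast_add, Pi.add_apply]; ring

theorem crossDifference_eq_zero_iff {m u : σ →₀ ℕ} {j : σ} :
    crossDifference m j u = 0 ↔ ∀ i, u j * m i = m j * u i := by
  simp only [crossDifference, AddMonoidHom.coe_mk, ZeroHom.coe_mk, funext_iff, Pi.zero_apply,
    sub_eq_zero]
  norm_cast

theorem crossDifference_eq_zero_and_dvd_iff {m u : σ →₀ ℕ} {j : σ} (hj : m j ≠ 0) :
    crossDifference m j u = 0 ∧ m j ∣ u j ↔ ∃ k : ℕ, u = k • m := by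
  rw [crossDifference_eq_zero_iff]
  constructor
  · rintro ⟨h_cross, k, hk⟩
    refine ⟨k, Finsupp.ext fun i => Nat.eq_of_mul_eq_mul_left (Nat.pos_of_ne_zero hj) ?_⟩
    rw [← h_cross i, hk, Finsupp.smul_apply, smul_eq_mul, mul_assoc]
  · rintro ⟨k, rfl⟩
    simp [mul_assoc, mul_left_comm]

/-- The character `u ↦ ζ ^ u j * z ^ (u j • m - m j • u)` of the monoid of exponents, with values in
the Laurent polynomials over `K`, which are encoded as the monoid algebra of `σ → ℤ`. -/
def twistedCharacter [CommSemiring K] (ζ : K) (m : σ →₀ ℕ) (j : σ) :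
    Multiplicative (σ →₀ ℕ) →* AddMonoidAlgebra K (σ → ℤ) where
  toFun u := AddMonoidAlgebra.single (crossDifference m j u.toAdd) (ζ ^ u.toAdd j)
  map_one' := by simp [AddMonoidAlgebra.one_def]
  map_mul' u v := by simp [AddMonoidAlgebra.single_mul_single, pow_add]

theorem twistedCharacter_ofAdd_eq_one_iff [CommSemiring K] [Nontrivial K] {ζ : K}
    {m u : σ →₀ ℕ} {j : σ} (hζ : IsPrimitiveRoot ζ (m j)) (hj : m j ≠ 0) :
    twistedCharacter ζ m j (.ofAdd u) = 1 ↔ ∃ k : ℕ, u = k • m := by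
  rw [← crossDifference_eq_zero_and_dvd_iff hj, ← hζ.pow_eq_one_iff_dvd]
  simp [twistedCharacter, AddMonoidAlgebra.one_def, AddMonoidAlgebra.single_inj]

theorem exists_map_eq_one_of_one_sub_monomial_dvd_prod {A : Type*} [CommRing R] [CommRing A]
    [IsDomain A] [Algebra R A] (χ : Multiplicative (σ →₀ ℕ) →* A) {m : σ →₀ ℕ}
    (hm : χ (.ofAdd m) = 1) {s : Finset ι} {f : ι → σ →₀ ℕ}
    (h : (1 - monomial m 1 : MvPolynomial σ R) ∣ ∏ i ∈ s, (1 - monomial (f i) 1)) :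
    ∃ i ∈ s, χ (.ofAdd (f i)) = 1 := by
  let F : MvPolynomial σ R →ₐ[R] A := AddMonoidAlgebra.lift R A (σ →₀ ℕ) χ
  have F_monomial (u : σ →₀ ℕ) : F (monomial u 1) = χ (.ofAdd u) :=
    (AddMonoidAlgebra.lift_single χ u 1).trans (one_smul R _)
  have h_prod : ∏ i ∈ s, (1 - χ (.ofAdd (f i))) = 0 := by
    simpa only [map_prod, map_sub, map_one, F_monomial, hm, sub_self, zero_dvd_iff]
      using map_dvd F h
  obtain ⟨i, hi, h_factor⟩ := Finset.prod_eq_zero_iff.mp h_prod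
  exact ⟨i, hi, (sub_eq_zero.mp h_factor).symm⟩

theorem one_sub_monomial_dvd_one_sub_monomial_nsmul [CommRing R] (m : σ →₀ ℕ) (k : ℕ) :
    (1 - monomial m 1 : MvPolynomial σ R) ∣ 1 - monomial (k • m) 1 := by
  simpa [monomial_pow] using one_sub_dvd_one_sub_pow (monomial m 1 : MvPolynomial σ R) k

theorem exists_eq_nsmul_of_one_sub_monomial_dvd_prod [CommRing R] [IsDomain R] [CharZero R]
    {m : σ →₀ ℕ} (hm : m ≠ 0) {s : Finset ι} {f : ι → σ →₀ ℕ}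
    (h : (1 - monomial m 1 : MvPolynomial σ R) ∣ ∏ i ∈ s, (1 - monomial (f i) 1)) :
    ∃ i ∈ s, ∃ k : ℕ, f i = k • m := by
  obtain ⟨j, hj⟩ := Finsupp.ne_iff.mp hm
  let K := AlgebraicClosure (FractionRing R)
  have : NeZero (m j) := ⟨hj⟩
  obtain ⟨ζ, hζ⟩ := HasEnoughRootsOfUnity.exists_primitiveRoot K (m j)
  obtain ⟨i, hi, h_one⟩ := exists_map_eq_one_of_one_sub_monomial_dvd_prod
    (twistedCharacter ζ m j)
    ((twistedCharacter_ofAdd_eq_one_iff hζ hj).mpr ⟨1, (one_smul ℕ m).symm⟩) h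
  exact ⟨i, hi, (twistedCharacter_ofAdd_eq_one_iff hζ hj).mp h_one⟩

theorem stmt_6_general [CommRing R] [IsDomain R] [CharZero R]
    (m : σ →₀ ℕ) (s : Finset ι) (f : ι → σ →₀ ℕ) :
    (1 - monomial m 1 : MvPolynomial σ R) ∣ ∏ i ∈ s, (1 - monomial (f i) 1) ↔
      ∃ i ∈ s, (1 - monomial m 1 : MvPolynomial σ R) ∣ 1 - monomial (f i) 1 := by
  refine ⟨fun h => ?_, fun ⟨i, hi, h⟩ => h.trans (Finset.dvd_prod_of_mem _ hi)⟩
  obtain rfl | hm := eq_or_ne m 0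
  · simpa [Finset.prod_eq_zero_iff] using h
  · obtain ⟨i, hi, k, hk⟩ := exists_eq_nsmul_of_one_sub_monomial_dvd_prod hm h
    exact ⟨i, hi, hk ▸ one_sub_monomial_dvd_one_sub_monomial_nsmul m k⟩

theorem qP_pow_mul_tP_pow (a b : ℕ) :
    qP ^ a * tP ^ b = monomial (Finsupp.single 0 a + Finsupp.single 1 b) 1 := by
  rw [qP, tP, X_pow_eq_monomial, X_pow_eq_monomial, monomial_mul, one_mul]

/-- for `a, b ≥ 1` and pairs `(a_i, b_i)`, the polynomial `1 - q^a t^b` divides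
`P = ∏ᵢ (1 - q^{a_i} t^{b_i})` in `ℂ[q,t]` iff it divides one of the factors. -/
theorem stmt_6 (a b : ℕ) (ha : 1 ≤ a) (hb : 1 ≤ b) (n : ℕ) (A B : Fin n → ℕ) :
    (1 - qP ^ a * tP ^ b) ∣ (∏ i, (1 - qP ^ A i * tP ^ B i)) ↔
      ∃ i, (1 - qP ^ a * tP ^ b) ∣ (1 - qP ^ A i * tP ^ B i) := by
  simpa [qP_pow_mul_tP_pow] using
    stmt_6_general (R := ℂ) (.single 0 a + .single 1 b : Fin 2 →₀ ℕ) Finset.univ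
      fun i => .single 0 (A i) + .single 1 (B i)
end
end

section
/- Let a, b ≥ 1 be integers, d = gcd(a,b), a' = a/d, b' = b/d, and let ω ∈ ℂ be a primitive a-th root of unity such that ω^{a'} is a primitive d-th root of unity. Let (a_1,b_1), …, (a_n,b_n) be pairs of natural numbers and set P = ∏_{i=1}^n (1 − q^{a_i} t^{b_i}) in ℂ[q,t]. Then 1 − q^a t^b divides P in ℂ[q,t] if and only if for every nonzero complex number u, the evaluation of P at q = ω·u^{−b'} and t = u^{a'} (with u^{−b'} the integer power of u in ℂ) is zero. -/
open MvPolynomial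

noncomputable section

/-!
Along the curve `(q, t) = (ω u^{-b'}, u^{a'})` the binomial `1 - q^k t^l` becomes
`1 - ω^k u^{a' l - b' k}`. If the product vanishes on the whole curve, then by pigeonhole a single
factor `1 - q^k t^l` vanishes at infinitely many `u`, which forces `a' l = b' k` and `ω^k = 1`.
Hence `(k, l)` is an integer multiple of `(a, b)`, and `1 - x` divides `1 - x^m`.
-/

theorem finite_setOf_pow_eq {R : Type*} [CommRing R] [IsDomain R] (c : R) {n : ℕ} (hn : n ≠ 0) :
    {u : R | u ^ n = c}.Finite := by
  classical
  refine (Polynomial.nthRoots n c).toFinset.finite_toSet.subset fun u hu ↦ ?_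
  simpa [Polynomial.mem_nthRoots hn.bot_lt] using hu

theorem finite_setOf_zpow_eq {K : Type*} [Field K] (c : K) {m : ℤ} (hm : m ≠ 0) :
    {u : K | u ^ m = c}.Finite := by
  obtain ⟨n, rfl | rfl⟩ := m.eq_nat_or_neg
  · simpa only [zpow_natCast] using finite_setOf_pow_eq c (by simpa using hm)
  · simpa only [zpow_neg, zpow_natCast, inv_eq_iff_eq_inv]
      using finite_setOf_pow_eq c⁻¹ (by simpa using hm)

theorem exists_infinite_zeros_of_prod_eq_zero {α ι M : Type*} [CommMonoidWithZero M]
    [Nontrivial M] [NoZeroDivisors M] {S : Set α} (hS : S.Infinite) {s : Finset ι}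
    {f : ι → α → M} (h : ∀ u ∈ S, ∏ i ∈ s, f i u = 0) :
    ∃ i ∈ s, {u ∈ S | f i u = 0}.Infinite := by
  by_contra! hfin
  refine hS ((s.finite_toSet.biUnion hfin).subset fun u hu ↦ ?_)
  obtain ⟨i, hi, hiu⟩ := Finset.prod_eq_zero_iff.1 (h u hu)
  exact Set.mem_biUnion hi ⟨hu, hiu⟩

theorem exists_eq_mul_of_proportional {a b a' b' k l : ℕ} (ha' : a' ≠ 0)
    (hab : a' * b = b' * a) (hkl : a' * l = b' * k) (hk : a ∣ k) :
    ∃ m, k = a * m ∧ l = b * m := by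
  obtain ⟨m, rfl⟩ := hk
  refine ⟨m, rfl, mul_left_cancel₀ ha' ?_⟩
  rw [hkl, ← mul_assoc, ← mul_assoc, hab]

theorem div_gcd_mul_eq_div_gcd_mul (a b : ℕ) : a / a.gcd b * b = b / a.gcd b * a := by
  rw [Nat.div_mul_right_comm (Nat.gcd_dvd_left a b),
    Nat.div_mul_right_comm (Nat.gcd_dvd_right a b), mul_comm]

theorem one_sub_pow_mul_pow_dvd {R : Type*} [CommRing R] (x y : R) (a b m : ℕ) :
    1 - x ^ a * y ^ b ∣ 1 - x ^ (a * m) * y ^ (b * m) := by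
  simpa only [pow_mul, mul_pow] using one_sub_dvd_one_sub_pow (x ^ a * y ^ b) m

section

variable {K : Type*} [Field K] {a b a' b' k l : ℕ} {ω u : K}

/-- The point `(q, t) = (ω u^{-b'}, u^{a'})` with parameter `u` on a coset of a one-parameter
subgroup of the torus; only `u ≠ 0` is meaningful, since `0⁻¹ = 0`. -/
def curvePoint (ω : K) (a' b' : ℕ) (u : K) : Fin 2 → K :=
  ![ω * u ^ (-(b' : ℤ)), u ^ a']

theorem eval_curvePoint_one_sub (ω : K) (hu : u ≠ 0) (a' b' k l : ℕ) :
    eval (curvePoint ω a' b' u) (1 - X 0 ^ k * X 1 ^ l) =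
      1 - ω ^ k * u ^ ((a' : ℤ) * l - b' * k) := by
  have hexp : (u ^ (-(b' : ℤ))) ^ k * (u ^ a') ^ l = u ^ ((a' : ℤ) * l - b' * k) := by
    rw [← zpow_natCast, ← zpow_mul, ← pow_mul, ← zpow_natCast u (a' * l), ← zpow_add₀ hu]
    push_cast
    ring_nf
  simp only [curvePoint, map_sub, map_one, map_mul, map_pow, eval_X, Matrix.cons_val_zero,
    Matrix.cons_val_one, mul_pow, mul_assoc, hexp]

theorem eval_curvePoint_one_sub_eq_zero (hab : a' * b = b' * a) (hω : ω ^ a = 1) (hu : u ≠ 0) :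
    eval (curvePoint ω a' b' u) (1 - X 0 ^ a * X 1 ^ b) = 0 := by
  have hexp : (a' : ℤ) * b - b' * a = 0 := sub_eq_zero.2 (mod_cast hab)
  rw [eval_curvePoint_one_sub ω hu, hω, hexp, zpow_zero, mul_one, sub_self]

theorem proportional_and_pow_eq_one_of_infinite_zeros
    (h : {u ∈ ({0}ᶜ : Set K) |
      eval (curvePoint ω a' b' u) (1 - X 0 ^ k * X 1 ^ l) = 0}.Infinite) :
    a' * l = b' * k ∧ ω ^ k = 1 := by
  have hroot {u : K} (hu : u ≠ 0 ∧ eval (curvePoint ω a' b' u) (1 - X 0 ^ k * X 1 ^ l) = 0) :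
      ω ^ k * u ^ ((a' : ℤ) * l - b' * k) = 1 := by
    rw [eval_curvePoint_one_sub ω hu.1, sub_eq_zero] at hu
    exact hu.2.symm
  have hexp : (a' : ℤ) * l - b' * k = 0 := by
    by_contra hne
    exact h ((finite_setOf_zpow_eq (ω ^ k)⁻¹ hne).subset fun u hu ↦
      eq_inv_of_mul_eq_one_right (hroot hu))
  obtain ⟨u, hu⟩ := h.nonempty
  refine ⟨?_, by simpa only [hexp, zpow_zero, mul_one] using hroot hu⟩
  exact_mod_cast sub_eq_zero.1 hexp

theorem one_sub_dvd_one_sub_of_infinite_zeros (ha' : a' ≠ 0) (hab : a' * b = b' * a)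
    (hω : IsPrimitiveRoot ω a)
    (h : {u ∈ ({0}ᶜ : Set K) |
      eval (curvePoint ω a' b' u) (1 - X 0 ^ k * X 1 ^ l) = 0}.Infinite) :
    (1 - X 0 ^ a * X 1 ^ b : MvPolynomial (Fin 2) K) ∣ 1 - X 0 ^ k * X 1 ^ l := by
  obtain ⟨hkl, hωk⟩ := proportional_and_pow_eq_one_of_infinite_zeros h
  obtain ⟨m, rfl, rfl⟩ := exists_eq_mul_of_proportional ha' hab hkl (hω.dvd_of_pow_eq_one k hωk)
  exact one_sub_pow_mul_pow_dvd _ _ a b m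

theorem stmt_7_general [Infinite K] (ha' : a' ≠ 0) (hab : a' * b = b' * a)
    (hω : IsPrimitiveRoot ω a) {ι : Type*} (s : Finset ι) (A B : ι → ℕ) :
    (1 - X 0 ^ a * X 1 ^ b : MvPolynomial (Fin 2) K) ∣ ∏ i ∈ s, (1 - X 0 ^ A i * X 1 ^ B i) ↔
      ∀ u : K, u ≠ 0 →
        eval (curvePoint ω a' b' u) (∏ i ∈ s, (1 - X 0 ^ A i * X 1 ^ B i)) = 0 := by
  constructor
  · intro hdvd u hu
    have hzero := eval_curvePoint_one_sub_eq_zero hab hω.pow_eq_one hu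
    exact zero_dvd_iff.1 (hzero ▸ map_dvd (eval (curvePoint ω a' b' u)) hdvd)
  · intro h
    simp only [map_prod] at h
    obtain ⟨i, hi, hinf⟩ :=
      exists_infinite_zeros_of_prod_eq_zero (Set.finite_singleton (0 : K)).infinite_compl h
    exact (one_sub_dvd_one_sub_of_infinite_zeros ha' hab hω hinf).trans
      (Finset.dvd_prod_of_mem _ hi)

end

/-- with `d = gcd(a,b)`, `a' = a/d`, `b' = b/d`, and `ω` a primitive `a`-th root
of unity such that `ω^{a'}` is a primitive `d`-th root of unity, `1 - q^a t^b` divides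
`P = ∏ᵢ (1 - q^{a_i} t^{b_i})` iff `P` vanishes at `q = ω·u^{-b'}`, `t = u^{a'}` for every
nonzero complex `u`. -/
theorem stmt_7 (a b : ℕ) (ha : 1 ≤ a) (hb : 1 ≤ b)
    (d a' b' : ℕ) (hd : d = Nat.gcd a b) (ha' : a' = a / d) (hb' : b' = b / d)
    (ω : ℂ) (hω : IsPrimitiveRoot ω a) (hωa' : IsPrimitiveRoot (ω ^ a') d)
    (n : ℕ) (A B : Fin n → ℕ) :
    (1 - qP ^ a * tP ^ b) ∣ (∏ i, (1 - qP ^ A i * tP ^ B i)) ↔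
      ∀ u : ℂ, u ≠ 0 →
        eval (![ω * u ^ (-(b' : ℤ)), u ^ a'] : Fin 2 → ℂ)
          (∏ i, (1 - qP ^ A i * tP ^ B i)) = 0 := by
  subst hd ha' hb'
  exact stmt_7_general (Nat.div_gcd_pos_of_pos_left b ha).ne' (div_gcd_mul_eq_div_gcd_mul a b) hω
    Finset.univ A B
end
end

section
/- Let a ≥ 1, k ≥ 1, s ≥ 0 be integers, let c be an integer with 1 ≤ c ≤ a, and let i be an integer with 1 ≤ i ≤ k. Then the polynomial 1 − q^a t^{k+1} does not divide the polynomial 1 − q^{s·a+c} t^{s·k+i} in ℂ[q,t]. -/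
open MvPolynomial

noncomputable section

/-! Modulo `1 - x^m` the monomial `x^m` becomes `1`, so sending each monomial to the class of its
exponent modulo `ℤ m` factors through this quotient. Hence `1 - x^m ∣ 1 - x^n` forces `n` to be a
multiple of `m`. A multiple `j (a, k + 1) = (s a + c, s k + i)` would have `s < j` by the first
coordinate, since `0 < c`, and then `j (k + 1) = s k + i ≤ (s + 1) k ≤ j k` by the second, which
is impossible for `j > 0`. -/

section AddMonoidAlgebra

variable {R M N : Type*} [Ring R] [Nontrivial R] [AddMonoid M] [AddMonoid N]

lemma map_eq_zero_of_one_sub_single_dvd (φ : M →+ N) {m n : M} (hm : φ m = 0)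
    (h : (1 - AddMonoidAlgebra.single m 1 : AddMonoidAlgebra R M) ∣
      1 - AddMonoidAlgebra.single n 1) :
    φ n = 0 := by
  have image_dvd := map_dvd (AddMonoidAlgebra.mapDomainRingHom R φ) h
  simp only [map_sub, map_one, AddMonoidAlgebra.mapDomainRingHom_apply,
    AddMonoidAlgebra.mapDomain_single, hm, ← AddMonoidAlgebra.one_def, sub_self,
    zero_dvd_iff] at image_dvd
  have single_eq_one : AddMonoidAlgebra.single (φ n) (1 : R) = 1 := (sub_eq_zero.mp image_dvd).symm
  exact AddMonoidAlgebra.single_left_injective one_ne_zero single_eq_one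

end AddMonoidAlgebra

section MvPolynomial

variable {R σ : Type*}

lemma exists_eq_nsmul_of_intCast_eq {m n : σ →₀ ℕ} {z : ℤ}
    (h : ∀ u, (n u : ℤ) = z * m u) : ∃ j : ℕ, n = j • m := by
  refine ⟨z.toNat, Finsupp.ext fun u => ?_⟩
  rw [Finsupp.smul_apply, smul_eq_mul]
  rcases le_total 0 z with hz | hz
  · zify
    rw [Int.toNat_of_nonneg hz, h u]
  · have n_nonpos : (n u : ℤ) ≤ 0 := h u ▸ mul_nonpos_of_nonpos_of_nonneg hz (by positivity)
    rw [Int.toNat_of_nonpos hz, zero_mul]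
    omega

variable [CommRing R] [Nontrivial R]

theorem one_sub_monomial_dvd_one_sub_monomial_iff {m n : σ →₀ ℕ} :
    (1 - monomial m (1 : R)) ∣ 1 - monomial n 1 ↔ ∃ j : ℕ, n = j • m := by
  constructor
  · intro h
    let toInt : (σ →₀ ℕ) →+ (σ →₀ ℤ) := Finsupp.mapRange.addMonoidHom (Nat.castAddMonoidHom ℤ)
    let expClass := (QuotientAddGroup.mk' (AddSubgroup.zmultiples (toInt m))).comp toInt
    have class_m : expClass m = 0 :=
      (QuotientAddGroup.eq_zero_iff _).mpr (AddSubgroup.mem_zmultiples _)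
    have class_n : expClass n = 0 := map_eq_zero_of_one_sub_single_dvd expClass class_m h
    obtain ⟨z, hz⟩ :=
      AddSubgroup.mem_zmultiples_iff.mp ((QuotientAddGroup.eq_zero_iff _).mp class_n)
    exact exists_eq_nsmul_of_intCast_eq fun u => by
      simpa [toInt] using (DFunLike.congr_fun hz u).symm
  · rintro ⟨j, rfl⟩
    simpa [monomial_pow] using one_sub_dvd_one_sub_pow (monomial m (1 : R)) j

lemma one_sub_X_pow_mul_X_pow_dvd_iff {u v : σ} (huv : u ≠ v) {a b c d : ℕ} :
    (1 - X u ^ a * X v ^ b : MvPolynomial σ R) ∣ 1 - X u ^ c * X v ^ d ↔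
      ∃ j : ℕ, c = j * a ∧ d = j * b := by
  simp only [X_pow_eq_monomial, monomial_mul, mul_one, one_sub_monomial_dvd_one_sub_monomial_iff]
  refine exists_congr fun j => ⟨fun h => ?_, ?_⟩
  · exact ⟨by simpa [huv, huv.symm] using DFunLike.congr_fun h u,
      by simpa [huv, huv.symm] using DFunLike.congr_fun h v⟩
  · rintro ⟨rfl, rfl⟩
    simp

theorem stmt_11_general {u v : σ} (huv : u ≠ v) {a k s c i : ℕ} (hc : 1 ≤ c) (hik : i ≤ k) :
    ¬ (1 - X u ^ a * X v ^ (k + 1) : MvPolynomial σ R) ∣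
      1 - X u ^ (s * a + c) * X v ^ (s * k + i) := by
  rw [one_sub_X_pow_mul_X_pow_dvd_iff huv]
  rintro ⟨j, hq, ht⟩
  have s_lt_j : s < j := lt_of_mul_lt_mul_right (a := a) (by omega) a.zero_le
  have exponent_lt : s * k + i < j * (k + 1) :=
    calc s * k + i ≤ (s + 1) * k := by rw [add_one_mul]; omega
      _ ≤ j * k := Nat.mul_le_mul_right k s_lt_j
      _ < j * (k + 1) := Nat.mul_lt_mul_of_pos_left k.lt_succ_self (by omega)
  exact exponent_lt.ne ht

end MvPolynomial

/-- for `a, k ≥ 1`, `s ≥ 0`, `1 ≤ c ≤ a` and `1 ≤ i ≤ k`, the polynomial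
`1 - q^a t^{k+1}` does not divide `1 - q^{s·a+c} t^{s·k+i}` in `ℂ[q,t]`. -/
theorem stmt_11 (a k s c i : ℕ) (ha : 1 ≤ a) (hk : 1 ≤ k) (hc1 : 1 ≤ c) (hca : c ≤ a)
    (hi1 : 1 ≤ i) (hik : i ≤ k) :
    ¬ (1 - qP ^ a * tP ^ (k + 1)) ∣ (1 - qP ^ (s * a + c) * tP ^ (s * k + i)) :=
  stmt_11_general zero_ne_one hc1 hik
end
end

section
/- Let a ≥ 1, k ≥ 1, s ≥ 0 be integers and let c be an integer with 1 ≤ c ≤ a. Then the polynomial 1 − q^a t^{k+1} does not divide the product ∏_{i=1}^{k} (1 − q^{s·a+c} t^{s·k+i}) in ℂ[q,t]. -/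
open MvPolynomial

noncomputable section

/-!
Over an algebraically closed field in which `aᵢ ≠ 0`, the hypersurface `X ^ a = 1` has a
component on which the monomials equal to `1` are exactly the powers of `X ^ a`; it is
parametrized by a torus with the help of a primitive `aᵢ`-th root of unity. Since Laurent
polynomials form a domain, `1 - X ^ a` can divide a product of binomials `1 - X ^ b` only if one
of the exponents `b` is a multiple of `a`. Here this reads `(s a + c, s k + i) = m (a, k + 1)`,
whose first coordinate forces `m > s`, while the second is at most `(s + 1) k`.
-/

section TorsionSpecialization

variable {σ : Type*} (a : σ →₀ ℕ) (i : σ)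

/-- The projection `b ↦ aᵢ b - bᵢ a` of exponent vectors along `a` onto `bᵢ = 0`, scaled by `aᵢ` to
stay integral. -/
def exponentProjection : (σ →₀ ℕ) →+ (σ →₀ ℤ) where
  toFun b := (a i : ℤ) • b.mapRange Nat.cast Nat.cast_zero -
    (b i : ℤ) • a.mapRange Nat.cast Nat.cast_zero
  map_zero' := by ext; simp
  map_add' b c := by
    ext j
    simp only [Finsupp.add_apply, Finsupp.sub_apply, Finsupp.smul_apply, Finsupp.mapRange_apply,
      smul_eq_mul, Nat.cast_add]
    ring

variable {a i}

lemma exponentProjection_eq_zero_iff {b : σ →₀ ℕ} :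
    exponentProjection a i b = 0 ↔ a i • b = b i • a := by
  simp only [exponentProjection, AddMonoidHom.coe_mk, ZeroHom.coe_mk, sub_eq_zero,
    Finsupp.ext_iff, Finsupp.smul_apply, Finsupp.mapRange_apply, smul_eq_mul]
  norm_cast

variable {K : Type*}

variable (a i) in
/-- The specialization `X ^ b ↦ ζ ^ bᵢ • X ^ (aᵢ b - bᵢ a)` into Laurent polynomials, encoded as the
group algebra of `σ →₀ ℤ`. When `ζ` is a primitive `aᵢ`-th root of unity, it restricts polynomials
to a component of `X ^ a = 1`, pulled back along a torus covering it. -/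
def torsionSpecialization [CommSemiring K] (ζ : K) :
    MvPolynomial σ K →ₐ[K] AddMonoidAlgebra K (σ →₀ ℤ) :=
  AddMonoidAlgebra.lift K _ (σ →₀ ℕ)
    { toFun b := AddMonoidAlgebra.single (exponentProjection a i b.toAdd) (ζ ^ b.toAdd i)
      map_one' := by simp [AddMonoidAlgebra.one_def]
      map_mul' b c := by simp [AddMonoidAlgebra.single_mul_single, pow_add] }

lemma torsionSpecialization_monomial [CommSemiring K] (ζ : K) (b : σ →₀ ℕ) :
    torsionSpecialization a i ζ (monomial b 1) =
      AddMonoidAlgebra.single (exponentProjection a i b) (ζ ^ b i) := by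
  refine (AddMonoidAlgebra.lift_single _ _ _).trans ?_
  simp

lemma torsionSpecialization_one_sub_monomial_eq_zero_iff [CommRing K] [Nontrivial K]
    {ζ : K} (hζ : IsPrimitiveRoot ζ (a i)) (hai : a i ≠ 0) {b : σ →₀ ℕ} :
    torsionSpecialization a i ζ (1 - monomial b 1) = 0 ↔ ∃ m : ℕ, b = m • a := by
  rw [map_sub, map_one, torsionSpecialization_monomial, sub_eq_zero, AddMonoidAlgebra.one_def,
    eq_comm, AddMonoidAlgebra.single_inj]
  simp only [one_ne_zero, and_false, or_false, exponentProjection_eq_zero_iff,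
    hζ.pow_eq_one_iff_dvd]
  constructor
  · rintro ⟨hab, m, hm⟩
    refine ⟨m, smul_right_injective _ hai ?_⟩
    simp only [hab, hm, mul_smul]
  · rintro ⟨m, rfl⟩
    simp [smul_smul, mul_comm]

end TorsionSpecialization

theorem one_sub_monomial_dvd_prod_one_sub_monomial_iff {σ ι R : Type*} [CommRing R] [IsDomain R]
    {a : σ →₀ ℕ} (i : σ) [NeZero (a i : R)] {J : Finset ι} {b : ι → σ →₀ ℕ} :
    (1 - monomial a (1 : R)) ∣ ∏ j ∈ J, (1 - monomial (b j) 1) ↔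
      ∃ j ∈ J, ∃ m : ℕ, b j = m • a := by
  constructor
  · intro hdvd
    let K := AlgebraicClosure (FractionRing R)
    have hai : a i ≠ 0 := fun h ↦ NeZero.ne (a i : R) (by simp [h])
    have : FaithfulSMul R K := .trans R (FractionRing R) K
    have : NeZero (a i : K) := .nat_of_injective (FaithfulSMul.algebraMap_injective R K)
    obtain ⟨ζ, hζ⟩ := HasEnoughRootsOfUnity.exists_primitiveRoot K (a i)
    let φ := (torsionSpecialization a i ζ).toRingHom.comp (map (algebraMap R K))
    have hφ (c : σ →₀ ℕ) : φ (1 - monomial c 1) = 0 ↔ ∃ m : ℕ, c = m • a := by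
      simpa [φ] using torsionSpecialization_one_sub_monomial_eq_zero_iff hζ hai (b := c)
    have hprod := map_dvd φ hdvd
    rw [(hφ a).2 ⟨1, (one_smul ℕ a).symm⟩, zero_dvd_iff, map_prod, Finset.prod_eq_zero_iff] at hprod
    simpa only [hφ] using hprod
  · rintro ⟨j, hj, m, hm⟩
    refine dvd_trans ?_ (Finset.dvd_prod_of_mem _ hj)
    rw [hm, ← one_pow (M := R) m, ← monomial_pow]
    simpa using sub_dvd_pow_sub_pow 1 (monomial a (1 : R)) m

lemma X_pow_mul_X_pow_eq_monomial {σ R : Type*} [CommSemiring R] (i j : σ) (m n : ℕ) :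
    (X i ^ m * X j ^ n : MvPolynomial σ R) =
      monomial (Finsupp.single i m + Finsupp.single j n) 1 := by
  rw [X_pow_eq_monomial, X_pow_eq_monomial, monomial_mul, one_mul]

theorem stmt_12_general {R : Type*} [CommRing R] [IsDomain R] (a k s c : ℕ)
    [NeZero ((k + 1 : ℕ) : R)] (hc : 1 ≤ c) :
    ¬ (1 - X 0 ^ a * X 1 ^ (k + 1) : MvPolynomial (Fin 2) R) ∣
        ∏ i ∈ Finset.Icc 1 k, (1 - X 0 ^ (s * a + c) * X 1 ^ (s * k + i)) := by
  simp only [X_pow_mul_X_pow_eq_monomial]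
  have : NeZero (((Finsupp.single 0 a + Finsupp.single 1 (k + 1) : Fin 2 →₀ ℕ) 1 : ℕ) : R) := by
    simpa using ‹NeZero ((k + 1 : ℕ) : R)›
  rw [one_sub_monomial_dvd_prod_one_sub_monomial_iff 1]
  rintro ⟨i, hi, m, hm⟩
  have hq : s * a + c = m * a := by simpa using DFunLike.congr_fun hm 0
  have ht : s * k + i = m * (k + 1) := by
    simpa [mul_add] using DFunLike.congr_fun hm 1
  have hik : i ≤ k := (Finset.mem_Icc.1 hi).2
  have hsm : s < m := lt_of_mul_lt_mul_right (by lia : s * a < m * a) a.zero_le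
  have hmk : (s + 1) * (k + 1) ≤ m * (k + 1) := Nat.mul_le_mul_right _ hsm
  lia

/-- for `a, k ≥ 1`, `s ≥ 0` and `1 ≤ c ≤ a`, the polynomial `1 - q^a t^{k+1}`
does not divide `∏_{i=1}^{k} (1 - q^{s·a+c} t^{s·k+i})` in `ℂ[q,t]`. -/
theorem stmt_12 (a k s c : ℕ) (ha : 1 ≤ a) (hk : 1 ≤ k) (hc1 : 1 ≤ c) (hca : c ≤ a) :
    ¬ (1 - qP ^ a * tP ^ (k + 1)) ∣
        ∏ i ∈ Finset.Icc 1 k, (1 - qP ^ (s * a + c) * tP ^ (s * k + i)) :=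
  stmt_12_general a k s c hc1
end
end

section
/- If there is a path in the Yang–Baxter graph from u to v (that is, v is reachable from u by finitely many edges), then u ⊴ v. -/
open Finset

/-- `u ≤_dom v`: for all `1 ≤ k ≤ N`, the sum of the first `k` entries of `u` is at most
the sum of the first `k` entries of `v`. -/
def domLE (N : ℕ) (u v : Fin N → ℕ) : Prop :=
  ∀ k : ℕ, 1 ≤ k → k ≤ N →
    (∑ j : Fin N, if (j : ℕ) < k then u j else 0) ≤
      ∑ j : Fin N, if (j : ℕ) < k then v j else 0

/-- `decSort N u = u⁺` is the weakly decreasing rearrangement of `u`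
(`Tuple.sort u` is the permutation sorting `u` increasingly; reversing indices yields the
weakly decreasing rearrangement). -/
noncomputable def decSort (N : ℕ) (u : Fin N → ℕ) : Fin N → ℕ :=
  fun j => u (Tuple.sort u j.rev)

/-- `u ⊴ v`: either (`u⁺ ≤_dom v⁺` and `u⁺ ≠ v⁺`) or (`u⁺ = v⁺` and `u ≤_dom v`). -/
def triLE (N : ℕ) (u v : Fin N → ℕ) : Prop :=
  (domLE N (decSort N u) (decSort N v) ∧ decSort N u ≠ decSort N v) ∨
    (decSort N u = decSort N v ∧ domLE N u v)

/-- `u·s_i`: the vector `u` with its entries in positions `i` and `i+1` exchanged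
(0-indexed). -/
def swapMove (N i : ℕ) (hi : i + 1 < N) (u : Fin N → ℕ) : Fin N → ℕ :=
  u ∘ ⇑(Equiv.swap (⟨i, Nat.lt_of_succ_lt hi⟩ : Fin N) ⟨i + 1, hi⟩)

/-- `uΦ = (u_2, u_3, …, u_N, u_1 + 1)`. -/
def phi (N : ℕ) (u : Fin N → ℕ) : Fin N → ℕ :=
  fun j => if h : (j : ℕ) + 1 < N then u ⟨(j : ℕ) + 1, h⟩ else u ⟨0, j.pos⟩ + 1

/-- The edge relation of the Yang–Baxter graph on `ℕ^N`: an edge `u → u·s_i` whenever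
`u_i < u_{i+1}`, and an edge `u → uΦ` for every `u`. -/
def ybEdge (N : ℕ) (u v : Fin N → ℕ) : Prop :=
  (∃ (i : ℕ) (hi : i + 1 < N),
      u ⟨i, Nat.lt_of_succ_lt hi⟩ < u ⟨i + 1, hi⟩ ∧ v = swapMove N i hi u) ∨
    v = phi N u

/-!
Prefix sums determine a tuple, so `domLE` is antisymmetric, and therefore `triLE` is transitive,
being a lexicographic combination of dominance of the rearrangements and dominance of the tuples
themselves. So it is enough to compare the two ends of an edge. An exchange `u·s_i` has the same
rearrangement as `u` and moves a larger entry to the front. The tuple `uΦ` is a permutation of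
`u + e₁`, so its rearrangement is entrywise at least that of `u`, and it differs from it because
its entries have a larger sum.
-/

/-- The sum of the first `k` entries of `u`; entries beyond the end of the tuple count as `0`. -/
def prefixSum {N : ℕ} {M : Type*} [AddCommMonoid M] (u : Fin N → M) (k : ℕ) : M :=
  ∑ j : Fin N with j.val < k, u j

section PrefixSum

variable {N : ℕ} {M : Type*} [AddCommMonoid M]

theorem prefixSum_zero (u : Fin N → M) : prefixSum u 0 = 0 := by
  simp [prefixSum]

theorem prefixSum_succ (u : Fin N → M) (j : Fin N) :
    prefixSum u (j + 1) = u j + prefixSum u j := by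
  have hinsert : univ.filter (fun i : Fin N => i.val < j.val + 1) =
      insert j (univ.filter fun i : Fin N => i.val < j.val) := by
    ext i
    simp only [mem_filter_univ, mem_insert, Fin.ext_iff]
    omega
  rw [prefixSum, hinsert, sum_insert (by simp), prefixSum]

theorem prefixSum_comp_swap_of_lt (u : Fin N → M) {i j : Fin N} {k : ℕ}
    (hi : i.val < k) (hj : j.val < k) : prefixSum (u ∘ Equiv.swap i j) k = prefixSum u k := by
  refine Equiv.Perm.sum_comp _ _ _ fun a ha => ?_
  obtain ⟨-, rfl | rfl⟩ := Equiv.swap_apply_ne_self_iff.mp ha <;> simpa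

end PrefixSum

section Dominance

variable {N : ℕ} {u v w : Fin N → ℕ}

theorem domLE_iff_prefixSum_le : domLE N u v ↔ ∀ k ≤ N, prefixSum u k ≤ prefixSum v k := by
  simp only [domLE, ← sum_filter]
  refine ⟨fun h k hk => ?_, fun h k _ hk => h k hk⟩
  rcases k.eq_zero_or_pos with rfl | hpos
  · rw [prefixSum_zero, prefixSum_zero]
  · exact h k hpos hk

theorem domLE_of_le (h : u ≤ v) : domLE N u v :=
  domLE_iff_prefixSum_le.mpr fun _ _ => sum_le_sum fun j _ => h j

theorem domLE.trans (huv : domLE N u v) (hvw : domLE N v w) : domLE N u w :=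
  fun k hk hkN => (huv k hk hkN).trans (hvw k hk hkN)

theorem domLE.antisymm (huv : domLE N u v) (hvu : domLE N v u) : u = v := by
  rw [domLE_iff_prefixSum_le] at huv hvu
  have hsum (k : ℕ) (hk : k ≤ N) : prefixSum u k = prefixSum v k :=
    (huv k hk).antisymm (hvu k hk)
  funext j
  have hsucc := hsum (j + 1) j.isLt
  rw [prefixSum_succ, prefixSum_succ, hsum j j.isLt.le] at hsucc
  exact Nat.add_right_cancel hsucc

theorem domLE_comp_swap {i j : Fin N} (hij : i ≤ j) (h : u i ≤ u j) :
    domLE N u (u ∘ Equiv.swap i j) := by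
  refine domLE_iff_prefixSum_le.mpr fun k _ => ?_
  rcases lt_or_ge (j : ℕ) k with hjk | hkj
  · have hik : (i : ℕ) < k := (Fin.val_le_of_le hij).trans_lt hjk
    exact (prefixSum_comp_swap_of_lt u hik hjk).ge
  · refine sum_le_sum fun m hm => ?_
    have hmj : m ≠ j := by
      rintro rfl
      exact hkj.not_gt (mem_filter.mp hm).2
    rcases eq_or_ne m i with rfl | hmi
    · simpa only [Function.comp_apply, Equiv.swap_apply_left] using h
    · rw [Function.comp_apply, Equiv.swap_apply_of_ne_of_ne hmi hmj]

end Dominance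

section Rearrangement

variable {N : ℕ} {α : Type*} [LinearOrder α]

theorem apply_sort_le_iff_lt_card (f : Fin N → α) (a : α) (i : Fin N) :
    f (Tuple.sort f i) ≤ a ↔ (i : ℕ) < Fintype.card {x // f x ≤ a} := by
  rw [← Fintype.card_congr ((Tuple.sort f).subtypeEquiv fun _ => Iff.rfl), Fintype.card_subtype]
  exact (Tuple.lt_card_le_iff_apply_le_of_monotone (Tuple.monotone_sort f)).symm

theorem apply_sort_le_apply_sort {f g : Fin N → α} (h : f ≤ g) (i : Fin N) :
    f (Tuple.sort f i) ≤ g (Tuple.sort g i) := by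
  rw [apply_sort_le_iff_lt_card]
  exact ((apply_sort_le_iff_lt_card g _ i).mp le_rfl).trans_le
    (Fintype.card_subtype_mono _ _ fun x hx => (h x).trans hx)

theorem decSort_monotone : Monotone (decSort N) :=
  fun _ _ h j => apply_sort_le_apply_sort h j.rev

theorem decSort_comp_perm (u : Fin N → ℕ) (σ : Equiv.Perm (Fin N)) :
    decSort N (u ∘ σ) = decSort N u :=
  funext fun j => congrFun Tuple.comp_perm_comp_sort_eq_comp_sort j.rev

theorem sum_decSort (u : Fin N → ℕ) : ∑ j, decSort N u j = ∑ j, u j :=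
  Equiv.sum_comp (Fin.revPerm.trans (Tuple.sort u)) u

end Rearrangement

section YangBaxter

variable {N : ℕ} {u v w : Fin N → ℕ}

theorem triLE_iff :
    triLE N u v ↔
      domLE N (decSort N u) (decSort N v) ∧ (decSort N u = decSort N v → domLE N u v) := by
  have hdom (h : decSort N u = decSort N v) : domLE N (decSort N u) (decSort N v) :=
    domLE_of_le h.le
  unfold triLE
  tauto

theorem triLE.refl (u : Fin N → ℕ) : triLE N u u :=
  Or.inr ⟨rfl, domLE_of_le le_rfl⟩

theorem triLE.trans (huv : triLE N u v) (hvw : triLE N v w) : triLE N u w := by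
  obtain ⟨hsort_uv, huv⟩ := triLE_iff.mp huv
  obtain ⟨hsort_vw, hvw⟩ := triLE_iff.mp hvw
  refine triLE_iff.mpr ⟨hsort_uv.trans hsort_vw, fun huw => ?_⟩
  have hsort_eq : decSort N u = decSort N v := hsort_uv.antisymm (huw ▸ hsort_vw)
  exact (huv hsort_eq).trans (hvw (hsort_eq.symm.trans huw))

theorem triLE_swapMove {i : ℕ} (hi : i + 1 < N)
    (h : u ⟨i, Nat.lt_of_succ_lt hi⟩ ≤ u ⟨i + 1, hi⟩) : triLE N u (swapMove N i hi u) :=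
  Or.inr ⟨(decSort_comp_perm u _).symm, domLE_comp_swap (Fin.mk_le_mk.mpr i.le_succ) h⟩

theorem phi_eq_comp_finRotate [NeZero N] (u : Fin N → ℕ) :
    phi N u = (u + Pi.single 0 1) ∘ finRotate N := by
  obtain ⟨n, rfl⟩ := Nat.exists_eq_succ_of_ne_zero (NeZero.ne N)
  funext j
  induction j using Fin.lastCases with
  | last => simp [phi]
  | cast j =>
    have hrotate : finRotate (n + 1) j.castSucc = j.succ := by
      rw [finRotate_apply, Fin.coeSucc_eq_succ]
    have hphi : phi (n + 1) u j.castSucc = u j.succ := dif_pos (Nat.succ_lt_succ j.isLt)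
    simp only [hphi, Function.comp_apply, hrotate, Pi.add_apply,
      Pi.single_eq_of_ne j.succ_ne_zero, add_zero]

theorem sum_phi [NeZero N] (u : Fin N → ℕ) : ∑ j, phi N u j = ∑ j, u j + 1 := by
  rw [phi_eq_comp_finRotate]
  simp only [Function.comp_apply, Equiv.sum_comp (finRotate N), Pi.add_apply, sum_add_distrib,
    sum_pi_single', mem_univ, if_true]

theorem decSort_le_decSort_phi [NeZero N] (u : Fin N → ℕ) : decSort N u ≤ decSort N (phi N u) := by
  rw [phi_eq_comp_finRotate, decSort_comp_perm]
  exact decSort_monotone le_self_add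

theorem triLE_phi [NeZero N] (u : Fin N → ℕ) : triLE N u (phi N u) := by
  refine Or.inl ⟨domLE_of_le (decSort_le_decSort_phi u), fun h => ?_⟩
  have hsum : ∑ j, u j = ∑ j, u j + 1 := by
    rw [← sum_phi, ← sum_decSort u, h, sum_decSort]
  omega

theorem triLE_of_ybEdge [NeZero N] (h : ybEdge N u v) : triLE N u v := by
  rcases h with ⟨i, hi, hlt, rfl⟩ | rfl
  · exact triLE_swapMove hi hlt.le
  · exact triLE_phi u

end YangBaxter

/-- if there is a path in the Yang–Baxter graph from `u` to `v`, then `u ⊴ v`. -/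
theorem stmt_13 (N : ℕ) (hN : 2 ≤ N) (u v : Fin N → ℕ)
    (h : Relation.ReflTransGen (ybEdge N) u v) : triLE N u v := by
  have : NeZero N := ⟨by omega⟩
  induction h with
  | refl => exact triLE.refl u
  | tail _ hedge ih => exact ih.trans (triLE_of_ybEdge hedge)
end

section
/- Let K be a field, t ∈ K with t ≠ 0, V a K-vector space, and T, Y, Y' : V → V K-linear maps satisfying the quadratic Hecke relation T ∘ T = (t−1)·T + t·id and the dual Bernstein–Lusztig relation T ∘ Y' ∘ T = t·Y. Suppose P ∈ V satisfies Y(P) = α·P and Y'(P) = α'·P for scalars α, α' ∈ K with α ≠ α'. Set Q = T(P) + ((1−t)·α/(α−α'))·P. Then Y(Q) = α'·Q and Y'(Q) = α·Q; that is, applying the Yang operator to a simultaneous eigenvector produces a simultaneous eigenvector with the two eigenvalues exchanged. -/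
/-! Multiplying the dual Bernstein–Lusztig relation `T Y' T = t Y` by `T` on the left or on the
right, reducing `T²` by the quadratic relation and cancelling `t` yields the commutation relations
`Y' T = T Y + (1 - t) Y` and `Y T = T Y' + (t - 1) Y`. On the span of `P` and `T P` both `Y` and
`Y'` are therefore triangular, with eigenvalues `α` and `α'`, and the scalar `c` in `T P + c P` is
the one that diagonalizes them: both cases require `c (α - α') = (1 - t) α`. -/

section HeckeAlgebra

variable {R A : Type*} [CommRing R] [Ring A] [Algebra R A] {t : R} {T Y Y' : A}

theorem mul_hecke_eq_hecke_mul_dual_add (ht : IsSMulRegular A t)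
    (hHecke : T * T = (t - 1) • T + t • 1) (hBL : T * Y' * T = t • Y) :
    Y * T = T * Y' + (t - 1) • Y := by
  apply ht
  calc t • (Y * T)
      = T * Y' * (T * T) := by rw [← smul_mul_assoc, ← hBL, mul_assoc _ T T]
    _ = (t - 1) • (T * Y' * T) + t • (T * Y') := by
      rw [hHecke, mul_add, mul_smul_comm, mul_smul_comm, mul_one]
    _ = t • (T * Y' + (t - 1) • Y) := by
      rw [hBL]
      module

theorem dual_mul_hecke_eq_hecke_mul_add (ht : IsSMulRegular A t)
    (hHecke : T * T = (t - 1) • T + t • 1) (hBL : T * Y' * T = t • Y) :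
    Y' * T = T * Y + (1 - t) • Y := by
  have h_expand : t • (T * Y) = (t - 1) • (t • Y) + t • (Y' * T) :=
    calc t • (T * Y)
        = T * T * (Y' * T) := by rw [← mul_smul_comm, ← hBL]; simp only [mul_assoc]
      _ = (t - 1) • (T * Y' * T) + t • (Y' * T) := by
        rw [hHecke, add_mul, smul_mul_assoc, smul_mul_assoc, one_mul, mul_assoc]
      _ = (t - 1) • (t • Y) + t • (Y' * T) := by rw [hBL]
  apply ht
  calc t • (Y' * T)
      = t • (T * Y) - (t - 1) • (t • Y) := eq_sub_of_add_eq' h_expand.symm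
    _ = t • (T * Y + (1 - t) • Y) := by module

end HeckeAlgebra

section Eigenvectors

variable {R M : Type*} [CommRing R] [AddCommGroup M] [Module R M]

theorem apply_add_smul_eq_smul_of_mul_eq_mul_add {T X X' Z : Module.End R M} {s α μ ν c : R}
    {P : M} (hcomm : X * T = T * X' + s • Z) (hX : X P = μ • P) (hX' : X' P = ν • P)
    (hZ : Z P = α • P) (hc : c * (ν - μ) = s * α) :
    X (T P + c • P) = ν • (T P + c • P) := by
  have hXT : X (T P) = ν • T P + (c * (ν - μ)) • P :=
    calc X (T P)
        = T (X' P) + s • Z P := LinearMap.congr_fun hcomm P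
      _ = ν • T P + (c * (ν - μ)) • P := by rw [hX', hZ, map_smul, smul_smul, hc]
  rw [map_add, map_smul, hXT, hX]
  module

theorem stmt_19_general {t : R} (ht : IsSMulRegular M t) {T Y Y' : Module.End R M}
    (hHecke : T * T = (t - 1) • T + t • 1) (hBL : T * Y' * T = t • Y) {P : M} {α α' c : R}
    (hc : c * (α - α') = (1 - t) * α) (hY : Y P = α • P) (hY' : Y' P = α' • P) :
    Y (T P + c • P) = α' • (T P + c • P) ∧ Y' (T P + c • P) = α • (T P + c • P) := by
  have ht_end : IsSMulRegular (Module.End R M) t := fun _ _ h ↦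
    LinearMap.ext fun v ↦ ht (LinearMap.congr_fun h v)
  constructor
  · have hc_neg : c * (α' - α) = (t - 1) * α := by linear_combination -hc
    exact apply_add_smul_eq_smul_of_mul_eq_mul_add
      (mul_hecke_eq_hecke_mul_dual_add ht_end hHecke hBL) hY hY' hY hc_neg
  · exact apply_add_smul_eq_smul_of_mul_eq_mul_add
      (dual_mul_hecke_eq_hecke_mul_add ht_end hHecke hBL) hY' hY hY hc

end Eigenvectors

/-- let `K` be a field, `t ≠ 0`, `V` a `K`-vector space and `T, Y, Y'`
`K`-linear endomorphisms of `V` satisfying the quadratic Hecke relation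
`T ∘ T = (t-1)·T + t·id` and the dual Bernstein–Lusztig relation `T ∘ Y' ∘ T = t·Y`.
If `P` is a simultaneous eigenvector with `Y(P) = α·P`, `Y'(P) = α'·P` and `α ≠ α'`, then
`Q = T(P) + ((1-t)·α/(α-α'))·P` satisfies `Y(Q) = α'·Q` and `Y'(Q) = α·Q`. -/
theorem stmt_19 (K : Type*) [Field K] (t : K) (ht : t ≠ 0)
    (V : Type*) [AddCommGroup V] [Module K V]
    (T Y Y' : V →ₗ[K] V)
    (hHecke : ∀ v : V, T (T v) = (t - 1) • T v + t • v)
    (hBL : ∀ v : V, T (Y' (T v)) = t • Y v)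
    (P : V) (α α' : K) (hαα' : α ≠ α')
    (hY : Y P = α • P) (hY' : Y' P = α' • P) :
    Y (T P + ((1 - t) * α / (α - α')) • P) = α' • (T P + ((1 - t) * α / (α - α')) • P) ∧
    Y' (T P + ((1 - t) * α / (α - α')) • P) = α • (T P + ((1 - t) * α / (α - α')) • P) :=
  stmt_19_general (smul_right_injective V ht) (LinearMap.ext hHecke) (LinearMap.ext hBL)
    (div_mul_cancel₀ _ (sub_ne_zero.mpr hαα')) hY hY'
end
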